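/- Let N ≥ 1 and let α, M be real numbers with 0 < α ≤ M. For y : Fin N → ℝ with y_n ≥ 0 for all n, define F(y) = ∑_{i : Fin N → ℕ} Γ(M + ∑_n i_n) · (2 + ∑_n y_n)^(-∑_n i_n) · ∏_n ( Γ(i_n + α)·y_n^{i_n} / (Γ(i_n + M)·i_n!) ). Then F(y) → Γ(α)^N · Γ(M)^(1-N) as y → 0 (i.e., as all components y_n → 0⁺), where Γ denotes the real Gamma function. (This is the reduction of the correlated-case series in the linear coefficient a₀ to its independent-fading value as all correlation parameters λ_{r,n} → 0.) -/

import Mathlib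

/-!
The limit is Tannery's theorem (dominated convergence for series). Each term is continuous in `y` at
`0`, where it vanishes unless `i = 0`; the `i = 0` term is constantly
`Γ(M) · (Γ(α) / Γ(M)) ^ N`, which is the claimed limit.

For the domination put `K = max M 1`. The functional equation of `Γ` gives
`Γ(M + k) ≤ Γ(M) · k! · K ^ k` and, since `α ≤ M`, `Γ(k + α) / Γ(k + M) ≤ Γ(α) / Γ(M)`. A multinomial
coefficient is a term of the expansion of `(1 + ⋯ + 1) ^ |i|`, so `|i|! ≤ N ^ |i| · ∏ i_n!`. The power
of `2 + ∑ y_n` is at most `1`. Hence for `0 < y_n < 1 / (2KN)` the term at `i` is at most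
`Γ(M) · (Γ(α) / Γ(M)) ^ N · ∏ (1/2) ^ i_n`, a product of geometric series.
-/

open Finset Topology Filter

lemma gamma_add_nat_le {M K : ℝ} (hM : 0 < M) (hMK : M ≤ K) (hK : 1 ≤ K) (k : ℕ) :
    Real.Gamma (M + k) ≤ Real.Gamma M * (k.factorial * K ^ k) := by
  induction k with
  | zero => simp
  | succ k ih =>
    have hk : (0 : ℝ) ≤ k := k.cast_nonneg
    have h1 : M + (k + 1 : ℕ) = (M + k) + 1 := by push_cast; ring
    rw [h1, Real.Gamma_add_one (by positivity)]
    have hG : 0 < Real.Gamma M := Real.Gamma_pos_of_pos hM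
    have h2 : M + k ≤ (k + 1) * K := by nlinarith
    calc (M + k) * Real.Gamma (M + k)
        ≤ ((k + 1) * K) * (Real.Gamma M * (k.factorial * K ^ k)) := by
          have : 0 < Real.Gamma (M + k) := Real.Gamma_pos_of_pos (by positivity)
          gcongr
      _ = _ := by rw [Nat.factorial_succ]; push_cast; ring

lemma gamma_ratio_le {α M : ℝ} (hα : 0 < α) (hαM : α ≤ M) (k : ℕ) :
    Real.Gamma (k + α) / Real.Gamma (k + M) ≤ Real.Gamma α / Real.Gamma M := by
  induction k with
  | zero => simp
  | succ k ih =>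
    have hM : 0 < M := hα.trans_le hαM
    have h1 : ((k + 1 : ℕ) : ℝ) + α = (k + α) + 1 := by push_cast; ring
    have h2 : ((k + 1 : ℕ) : ℝ) + M = (k + M) + 1 := by push_cast; ring
    rw [h1, h2, Real.Gamma_add_one (by positivity), Real.Gamma_add_one (by positivity),
      mul_div_mul_comm]
    have h3 : (k + α) / (k + M) ≤ 1 := by
      rw [div_le_one (by positivity)]; linarith
    have h4 : 0 ≤ Real.Gamma (k + α) / Real.Gamma (k + M) :=
      div_nonneg (Real.Gamma_pos_of_pos (by positivity)).le
        (Real.Gamma_pos_of_pos (by positivity)).le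
    exact (mul_le_of_le_one_left h4 h3).trans ih

lemma factorial_sum_le {N : ℕ} (i : Fin N → ℕ) :
    (∑ n, i n).factorial ≤ N ^ (∑ n, i n) * ∏ n, (i n).factorial := by
  have h := Finset.sum_pow_eq_sum_piAntidiag (R := ℕ) (univ : Finset (Fin N)) (fun _ => 1)
    (∑ n, i n)
  simp only [sum_const, card_univ, Fintype.card_fin, smul_eq_mul, mul_one, one_pow, prod_const_one,
    Nat.cast_id] at h
  rw [← Nat.multinomial_spec, mul_comm, h]
  gcongr
  exact Finset.single_le_sum (f := fun k => Nat.multinomial univ k) (fun _ _ => Nat.zero_le _)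
    (by simp)

lemma summable_pi_prod {f : ℕ → ℝ} (hf0 : ∀ k, 0 ≤ f k) (hf : Summable f) (N : ℕ) :
    Summable (fun i : Fin N → ℕ => ∏ n, f (i n)) := by
  induction N with
  | zero => exact Summable.of_finite
  | succ N ih =>
    rw [← (Fin.consEquiv (fun _ : Fin (N + 1) => ℕ)).summable_iff]
    have := hf.mul_of_nonneg ih hf0 (fun i => prod_nonneg fun n _ => hf0 _)
    refine this.congr fun p => ?_
    simp [Fin.consEquiv, Fin.prod_univ_succ]

/-- The geometric majorant of the term of index `i`, uniform over small positive `y`. -/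
lemma term_le {N : ℕ} (hN : 1 ≤ N) {α M K : ℝ} (hα : 0 < α) (hαM : α ≤ M) (hMK : M ≤ K)
    (hK : 1 ≤ K) {y : Fin N → ℝ} (hy : ∀ n, 0 < y n) (hyt : ∀ n, y n < 1 / (2 * K * N))
    (i : Fin N → ℕ) :
    ‖Real.Gamma (M + ∑ n, (i n : ℝ)) * (2 + ∑ n, y n) ^ (-(∑ n, (i n : ℝ))) *
            ∏ n, (Real.Gamma ((i n : ℝ) + α) * y n ^ i n /
              (Real.Gamma ((i n : ℝ) + M) * ((i n).factorial : ℝ)))‖ ≤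
      Real.Gamma M * (Real.Gamma α / Real.Gamma M) ^ N * ∏ n, (1 / 2 : ℝ) ^ i n := by
  have hM : 0 < M := hα.trans_le hαM
  have hN' : (0 : ℝ) < N := by exact_mod_cast hN
  have hGM : 0 < Real.Gamma M := Real.Gamma_pos_of_pos hM
  have hGα : 0 < Real.Gamma α := Real.Gamma_pos_of_pos hα
  have hS : 0 ≤ ∑ n, y n := sum_nonneg fun n _ => (hy n).le
  have hGi : ∀ (k : ℕ) {a : ℝ}, 0 < a → 0 < Real.Gamma (k + a) := fun k a ha =>
    Real.Gamma_pos_of_pos (by positivity)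
  have hfac : ∀ n, 0 ≤ Real.Gamma ((i n : ℝ) + α) * y n ^ i n /
      (Real.Gamma ((i n : ℝ) + M) * ((i n).factorial : ℝ)) := fun n => by
    have := hGi (i n) hα
    have := hGi (i n) hM
    have := hy n
    positivity
  set k := ∑ n, i n with hk
  have hcast : ∑ n, (i n : ℝ) = (k : ℝ) := by simp [hk]
  rw [hcast]
  have hG : 0 < Real.Gamma (M + k) := Real.Gamma_pos_of_pos (by positivity)
  have hrp : (2 + ∑ n, y n) ^ (-(k : ℝ)) ≤ 1 :=
    Real.rpow_le_one_of_one_le_of_nonpos (by linarith) (by simp)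
  have hrp0 : 0 ≤ (2 + ∑ n, y n) ^ (-(k : ℝ)) := by positivity
  rw [Real.norm_of_nonneg (mul_nonneg (mul_nonneg hG.le hrp0) (prod_nonneg fun n _ => hfac n))]
  have hprod : ∏ n, (Real.Gamma ((i n : ℝ) + α) * y n ^ i n /
      (Real.Gamma ((i n : ℝ) + M) * ((i n).factorial : ℝ))) ≤
      ∏ n, ((Real.Gamma α / Real.Gamma M) * ((1 / (2 * K * N)) ^ i n / (i n).factorial)) := by
    refine prod_le_prod (fun n _ => hfac n) fun n _ => ?_
    rw [mul_div_mul_comm]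
    have := gamma_ratio_le hα hαM (i n)
    have := (hy n).le
    have := (hyt n).le
    gcongr
  have hfact : (k.factorial : ℝ) ≤ N ^ k * ∏ n, ((i n).factorial : ℝ) := by
    exact_mod_cast factorial_sum_le i
  have hP : (0 : ℝ) < ∏ n, ((i n).factorial : ℝ) := prod_pos fun n _ => by positivity
  calc _ ≤ (Real.Gamma M * ((N ^ k * ∏ n, ((i n).factorial : ℝ)) * K ^ k)) * 1 *
      ∏ n, ((Real.Gamma α / Real.Gamma M) * ((1 / (2 * K * N)) ^ i n / (i n).factorial)) := by
        have h1 : Real.Gamma (M + k) ≤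
            Real.Gamma M * ((N ^ k * ∏ n, ((i n).factorial : ℝ)) * K ^ k) :=
          (gamma_add_nat_le hM hMK hK k).trans (by gcongr)
        have := prod_nonneg fun n (_ : n ∈ univ) => hfac n
        gcongr
    _ = _ := by
        rw [prod_mul_distrib, prod_const, card_univ, Fintype.card_fin, prod_div_distrib,
          prod_pow_eq_pow_sum, prod_pow_eq_pow_sum, ← hk]
        have : (1 / 2 : ℝ) ^ k = N ^ k * K ^ k * (1 / (2 * K * N)) ^ k := by
          rw [← mul_pow, ← mul_pow]; congr 1; field_simp
        rw [this]
        field_simp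

/-- Reduction of the correlated-case series in the linear coefficient `a₀` to its
independent-fading value: with `0 < α ≤ M`,
`F(y) = ∑_{i} Γ(M + |i|)·(2 + ∑ y n)^(-|i|)·∏ (Γ(i_n+α) y_n^{i_n}/(Γ(i_n+M) i_n!))`
tends to `Γ(α)^N · Γ(M)^(1-N)` as all components `y n → 0⁺`. -/
theorem stmt_8 (N : ℕ) (hN : 1 ≤ N) (α M : ℝ) (hα : 0 < α) (hαM : α ≤ M) :
    Tendsto (fun y : Fin N → ℝ =>
        ∑' i : Fin N → ℕ,
          Real.Gamma (M + ∑ n, (i n : ℝ)) * (2 + ∑ n, y n) ^ (-(∑ n, (i n : ℝ))) *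
            ∏ n, (Real.Gamma ((i n : ℝ) + α) * y n ^ i n /
              (Real.Gamma ((i n : ℝ) + M) * ((i n).factorial : ℝ))))
      (𝓝[{y : Fin N → ℝ | ∀ n, 0 < y n}] 0)
      (𝓝 (Real.Gamma α ^ N * Real.Gamma M ^ (1 - (N : ℝ)))) := by
  have hM : 0 < M := hα.trans_le hαM
  have hGM : 0 < Real.Gamma M := Real.Gamma_pos_of_pos hM
  have hN' : (0 : ℝ) < N := by exact_mod_cast hN
  set K := max M 1 with hK
  have hK1 : 1 ≤ K := le_max_right _ _
  -- The limit as the sum of the terms evaluated at `y = 0`, of which only `i = 0` survives.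
  have hlim : Real.Gamma α ^ N * Real.Gamma M ^ (1 - (N : ℝ)) = ∑' i : Fin N → ℕ,
      Real.Gamma (M + ∑ n, (i n : ℝ)) *
        (2 + ∑ n, (0 : Fin N → ℝ) n) ^ (-(∑ n, (i n : ℝ))) *
          ∏ n, (Real.Gamma ((i n : ℝ) + α) * (0 : Fin N → ℝ) n ^ i n /
            (Real.Gamma ((i n : ℝ) + M) * ((i n).factorial : ℝ))) := by
    rw [tsum_eq_single 0]
    · simp only [Pi.zero_apply, Nat.cast_zero, sum_const_zero, add_zero, neg_zero, Real.rpow_zero,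
        zero_add, pow_zero, Nat.factorial_zero, Nat.cast_one, mul_one, prod_const, card_univ,
        Fintype.card_fin]
      rw [Real.rpow_sub hGM, Real.rpow_one, Real.rpow_natCast, div_pow]
      field_simp
    · intro i hi
      obtain ⟨n, hn⟩ := Function.ne_iff.mp hi
      rw [prod_eq_zero (mem_univ n), mul_zero]
      simp only [Pi.zero_apply] at hn ⊢
      simp [hn]
  rw [hlim]
  refine tendsto_tsum_of_dominated_convergence
    (((summable_pi_prod (fun k => by positivity) summable_geometric_two N)).mul_left
      (Real.Gamma M * (Real.Gamma α / Real.Gamma M) ^ N)) (fun i => ?_) ?_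
  · refine Tendsto.mono_left (ContinuousAt.tendsto ?_) nhdsWithin_le_nhds
    refine ContinuousAt.mul (ContinuousAt.mul continuousAt_const
      (ContinuousAt.rpow_const ?_ (Or.inl (by simp)))) ?_
    · fun_prop
    · exact (continuous_finsetProd _ fun n _ =>
        (continuous_const.mul ((continuous_apply n).pow _)).div_const _).continuousAt
  · have hsmall : ∀ᶠ y in 𝓝 (0 : Fin N → ℝ), ∀ n, y n < 1 / (2 * K * N) := by
      refine eventually_all.mpr fun n => ?_
      exact (continuous_apply n).continuousAt.eventually_lt continuousAt_const
        (by simp only [Pi.zero_apply]; positivity)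
    filter_upwards [self_mem_nhdsWithin, nhdsWithin_le_nhds hsmall] with y hy hyt i
    exact term_le hN hα hαM (le_max_left _ _) hK1 hy hyt i
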